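/- arXiv:1812.11299 — 3 statements merged into one kernel-verified Lean document; each statement's English description precedes it below -/
import Mathlib

section
/- Let (p_n)_{n≥1} be an R-Schauder decomposition of a complex Banach space X. Let (c_n)_{n≥1} be a nondecreasing sequence of real numbers with 0 < c_n < 1 for all n, and let T = M_c ∈ B(X) be the associated multiplier operator. Then both sets {T^n : n ≥ 0} and {n T^n (I − T) : n ≥ 1} are R-bounded, i.e. T is an R-Ritt operator. -/
open Filter Topology NormedSpace

/-- Average over all sign vectors `(ε_1,…,ε_k) ∈ {−1,1}^k` of `‖∑_j ε_j v_j‖`. -/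
noncomputable def signAvg {X : Type*} [NormedAddCommGroup X] [NormedSpace ℂ X]
    (k : ℕ) (v : Fin k → X) : ℝ :=
  (2 ^ k : ℝ)⁻¹ * ∑ ε : Fin k → Bool, ‖∑ j : Fin k, (if ε j then (1 : ℝ) else -1) • v j‖

/-- A set of bounded operators on `X` is `R`-bounded. -/
def IsRBounded {X : Type*} [NormedAddCommGroup X] [NormedSpace ℂ X]
    (F : Set (X →L[ℂ] X)) : Prop :=
  ∃ C : ℝ, 0 ≤ C ∧ ∀ (k : ℕ) (T : Fin k → X →L[ℂ] X) (x : Fin k → X),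
    (∀ j, T j ∈ F) → signAvg k (fun j => (T j) (x j)) ≤ C * signAvg k x

/-- `(p n)` is a Schauder decomposition of `X`: the `p n` are pairwise "orthogonal"
bounded projections whose partial sums converge pointwise to the identity.
(Indexing starts at `0`, corresponding to `n = 1` in the classical notation.) -/
def IsSchauderDecomposition {X : Type*} [NormedAddCommGroup X] [NormedSpace ℂ X]
    (p : ℕ → X →L[ℂ] X) : Prop :=
  (∀ n, (p n).comp (p n) = p n) ∧
  (∀ m n, m ≠ n → (p m).comp (p n) = 0) ∧
  (∀ x : X, Tendsto (fun N => ∑ n ∈ Finset.range N, p n x) atTop (nhds x))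

/-- The partial sum projection `P_N = ∑_{n<N} p_n`. -/
noncomputable def partialSum {X : Type*} [NormedAddCommGroup X] [NormedSpace ℂ X]
    (p : ℕ → X →L[ℂ] X) (N : ℕ) : X →L[ℂ] X :=
  ∑ n ∈ Finset.range N, p n


section aux
variable {X : Type*} [NormedAddCommGroup X] [NormedSpace ℂ X]

lemma signAvg_comb (k : ℕ) (v w : Fin k → X) (a b : ℝ) (ha : 0 ≤ a) (hb : 0 ≤ b) :
    signAvg k (a • v + b • w) ≤ a * signAvg k v + b * signAvg k w := by
  unfold signAvg
  have : a * ((2 ^ k : ℝ)⁻¹ * ∑ ε : Fin k → Bool, ‖∑ j : Fin k, (if ε j then (1 : ℝ) else -1) • v j‖)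
      + b * ((2 ^ k : ℝ)⁻¹ * ∑ ε : Fin k → Bool, ‖∑ j : Fin k, (if ε j then (1 : ℝ) else -1) • w j‖)
      = (2 ^ k : ℝ)⁻¹ * ∑ ε : Fin k → Bool,
        (a * ‖∑ j : Fin k, (if ε j then (1 : ℝ) else -1) • v j‖
        + b * ‖∑ j : Fin k, (if ε j then (1 : ℝ) else -1) • w j‖) := by
    rw [Finset.sum_add_distrib, ← Finset.mul_sum, ← Finset.mul_sum]; ring
  rw [this]
  refine mul_le_mul_of_nonneg_left (Finset.sum_le_sum fun ε _ => ?_) (by positivity)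
  have h : ∑ j : Fin k, (if ε j then (1 : ℝ) else -1) • (a • v + b • w) j
      = a • ∑ j : Fin k, (if ε j then (1 : ℝ) else -1) • v j
        + b • ∑ j : Fin k, (if ε j then (1 : ℝ) else -1) • w j := by
    rw [Finset.smul_sum, Finset.smul_sum, ← Finset.sum_add_distrib]
    refine Finset.sum_congr rfl fun j _ => ?_
    simp only [Pi.add_apply, Pi.smul_apply, smul_add]
    rw [smul_comm a, smul_comm b]
  rw [h]
  refine (norm_add_le _ _).trans ?_
  rw [norm_smul, norm_smul, Real.norm_of_nonneg ha, Real.norm_of_nonneg hb]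

lemma signAvg_smul (k : ℕ) (v : Fin k → X) (a : ℝ) (ha : 0 ≤ a) :
    signAvg k (a • v) ≤ a * signAvg k v := by
  simpa using signAvg_comb k v 0 a 0 ha le_rfl

lemma signAvg_neg (k : ℕ) (v : Fin k → X) (i : Fin k) (y : X) :
    signAvg k (Function.update v i (-y)) = signAvg k (Function.update v i y) := by
  unfold signAvg
  congr 1
  have hinv : Function.Involutive (fun ε : Fin k → Bool => Function.update ε i (!ε i)) := by
    intro ε; simp
  refine Fintype.sum_equiv hinv.toPerm _ _ fun ε => ?_
  congr 1
  refine Finset.sum_congr rfl fun j _ => ?_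
  simp only [Function.Involutive.coe_toPerm]
  by_cases h : j = i
  · subst h
    by_cases hε : ε j = true <;> simp [hε]
  · simp [Function.update_of_ne h]

lemma signAvg_cont (k : ℕ) : Continuous (fun v : Fin k → X => signAvg k v) := by
  unfold signAvg
  fun_prop

/-- Sublevel set in one coordinate. -/
lemma sublevel_absConvex (k : ℕ) (v : Fin k → X) (i : Fin k) (B : ℝ) :
    AbsConvex ℝ {y : X | signAvg k (Function.update v i y) ≤ B} := by
  have hconv : Convex ℝ {y : X | signAvg k (Function.update v i y) ≤ B} := by
    intro y hy z hz a b ha hb hab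
    simp only [Set.mem_ofPred_eq] at *
    have : Function.update v i (a • y + b • z)
        = a • Function.update v i y + b • Function.update v i z := by
      funext j
      by_cases h : j = i
      · subst h; simp
      · simp [Function.update_of_ne h, ← add_smul, hab]
    rw [this]
    refine (signAvg_comb k _ _ a b ha hb).trans ?_
    calc _ ≤ a * B + b * B := by gcongr
      _ = B := by rw [← add_mul, hab, one_mul]
  refine ⟨(balanced_iff_neg_mem hconv).2 ?_, hconv⟩
  intro y hy
  simpa only [Set.mem_ofPred_eq, signAvg_neg] using hy

lemma sublevel_closed (k : ℕ) (v : Fin k → X) (i : Fin k) (B : ℝ) :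
    IsClosed {y : X | signAvg k (Function.update v i y) ≤ B} := by
  refine isClosed_le ((signAvg_cont k).comp ?_) continuous_const
  exact continuous_const.update i continuous_id

lemma hull_bound (k : ℕ) (D : Fin k → Set X) (B : ℝ)
    (h : ∀ v : Fin k → X, (∀ j, v j ∈ D j) → signAvg k v ≤ B)
    (v : Fin k → X) (hv : ∀ j, v j ∈ closedAbsConvexHull ℝ (D j)) : signAvg k v ≤ B := by
  have key : ∀ s : Finset (Fin k), ∀ v : Fin k → X,
      (∀ j ∈ s, v j ∈ closedAbsConvexHull ℝ (D j)) → (∀ j ∉ s, v j ∈ D j) →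
      signAvg k v ≤ B := by
    intro s
    induction s using Finset.induction_on with
    | empty => intro v _ h2; exact h v fun j => h2 j (by simp)
    | insert i s hi ih =>
      intro v h1 h2
      have hsub : D i ⊆ {y : X | signAvg k (Function.update v i y) ≤ B} := by
        intro y hy
        refine ih _ (fun j hj => ?_) (fun j hj => ?_)
        · have : j ≠ i := fun e => hi (e ▸ hj)
          rw [Function.update_of_ne this]
          exact h1 j (Finset.mem_insert_of_mem hj)
        · by_cases e : j = i
          · subst e; simpa using hy
          · rw [Function.update_of_ne e]
            exact h2 j (by simp [e, hj])
      have := closedAbsConvexHull_min hsub (sublevel_absConvex k v i B) (sublevel_closed k v i B)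
        (h1 i (Finset.mem_insert_self i s))
      simpa using this
  exact key Finset.univ v (fun j _ => hv j) (fun j hj => absurd (Finset.mem_univ j) hj)

lemma half_sub_mem {H : Set X} (hH : AbsConvex ℝ H) {a b : X} (ha : a ∈ H) (hb : b ∈ H) :
    (1/2 : ℝ) • (a - b) ∈ H := by
  have hb' : -b ∈ H := hH.1.neg_mem_iff.2 hb
  have := hH.2 ha hb' (show (0:ℝ) ≤ 1/2 by norm_num) (show (0:ℝ) ≤ 1/2 by norm_num) (by norm_num)
  rwa [← smul_add, ← sub_eq_add_neg] at this

lemma sum_mem_aux {H : Set X} (hH : AbsConvex ℝ H) (h0 : (0:X) ∈ H) (s : Finset ℕ) (a : ℕ → ℝ)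
    (y : ℕ → X) (ha : ∀ i, 0 ≤ a i) (hs : ∑ i ∈ s, a i ≤ 1) (hy : ∀ i, y i ∈ H) :
    ∑ i ∈ s, a i • y i ∈ H := by
  rcases (Finset.sum_nonneg (s := s) fun i _ => ha i).eq_or_lt with h | h
  · have : ∑ i ∈ s, a i • y i = 0 := by
      refine Finset.sum_eq_zero fun i hi => ?_
      rw [(Finset.sum_eq_zero_iff_of_nonneg (fun i _ => ha i)).1 h.symm i hi, zero_smul]
    rwa [this]
  · have h1 := hH.2.centerMass_mem (t := s) (w := a) (z := y) (fun i _ => ha i) h (fun i _ => hy i)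
    have h2 := hH.2.smul_mem_of_zero_mem h0 h1 ⟨h.le, hs⟩
    rwa [Finset.centerMass, smul_inv_smul₀ h.ne'] at h2

lemma mono_mem {H : Set X} (hH : AbsConvex ℝ H) (q : ℕ → X)
    (hq : ∀ N, ∑ n ∈ Finset.range (N+1), q n ∈ H) (u : ℕ → ℝ) (hu : Monotone u)
    (hu0 : ∀ n, 0 ≤ u n) (hu1 : ∀ n, u n ≤ 1) (N : ℕ) :
    (1/2 : ℝ) • ∑ n ∈ Finset.range N, u n • q n ∈ H := by
  have h0 : (0:X) ∈ H := by simpa using half_sub_mem hH (hq 0) (hq 0)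
  rcases N with _ | N
  · simpa using h0
  rw [Finset.sum_range_by_parts]
  refine half_sub_mem hH ?_ ?_
  · exact hH.2.smul_mem_of_zero_mem h0 (hq N) ⟨hu0 _, hu1 _⟩
  · refine sum_mem_aux hH h0 _ _ _ (fun i => sub_nonneg.2 (hu (Nat.le_succ i))) ?_ hq
    rw [Finset.sum_range_sub]
    linarith [hu0 0, hu1 (N + 1 - 1)]

lemma mult_rbdd (p : ℕ → X →L[ℂ] X) (hp : IsSchauderDecomposition p)
    (hR : IsRBounded (Set.range fun N : ℕ => partialSum p (N + 1)))
    (F : Set (X →L[ℂ] X))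
    (hF : ∀ S ∈ F, ∃ u w : ℕ → ℝ, Monotone u ∧ Monotone w ∧ (∀ n, 0 ≤ u n ∧ u n ≤ 1) ∧
      (∀ n, 0 ≤ w n ∧ w n ≤ 1) ∧ ∀ m x, p m (S x) = (u m - w m) • p m x) :
    IsRBounded F := by
  obtain ⟨C, hC, hb⟩ := hR
  refine ⟨4 * C, by positivity, fun k T x hT => ?_⟩
  have key : signAvg k (fun j => (1/4 : ℝ) • (T j) (x j)) ≤ C * signAvg k x := by
    refine hull_bound k (fun j => Set.range fun N => partialSum p (N+1) (x j)) _ ?_ _ ?_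
    · intro v hv
      choose N hN using hv
      have := hb k (fun j => partialSum p (N j + 1)) x (fun j => ⟨N j, rfl⟩)
      simpa only [hN] using this
    · intro j
      obtain ⟨u, w, hu, hw, hu01, hw01, hS⟩ := hF _ (hT j)
      set H := closedAbsConvexHull ℝ (Set.range fun N => partialSum p (N+1) (x j)) with hHdef
      have hH : AbsConvex ℝ H := absConvex_convexClosedHull
      have hcl : IsClosed H := isClosed_closedAbsConvexHull
      have hq : ∀ N, ∑ n ∈ Finset.range (N+1), p n (x j) ∈ H := by
        intro N
        refine subset_closedAbsConvexHull ⟨N, ?_⟩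
        simp [partialSum]
      have hlim := (hp.2.2 (T j (x j))).const_smul (1/4 : ℝ)
      refine hcl.mem_of_tendsto hlim (Eventually.of_forall fun N => ?_)
      have h1 := mono_mem hH _ hq u hu (fun n => (hu01 n).1) (fun n => (hu01 n).2) N
      have h2 := mono_mem hH _ hq w hw (fun n => (hw01 n).1) (fun n => (hw01 n).2) N
      have h3 := half_sub_mem hH h1 h2
      rw [← smul_sub, ← Finset.sum_sub_distrib, smul_smul] at h3
      simp only [hS, sub_smul]
      convert h3 using 2
      norm_num
  have e : (fun j => (T j) (x j)) = (4:ℝ) • (fun j => (1/4 : ℝ) • (T j) (x j)) := by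
    funext j; simp [smul_smul]
  rw [e]
  refine (signAvg_smul k _ 4 (by norm_num)).trans ?_
  linarith

lemma Q_mono (n : ℕ) : MonotoneOn (fun t : ℝ => (n+1) * t^n - n * t^(n+1)) (Set.Icc 0 1) := by
  refine monotoneOn_of_deriv_nonneg (convex_Icc 0 1) (by fun_prop) (by fun_prop) ?_
  intro t ht
  rw [interior_Icc] at ht
  have hd : HasDerivAt (fun t : ℝ => ((n:ℝ)+1) * t^n - n * t^(n+1))
      (((n:ℝ)+1) * (n * t^(n-1)) - n * (((n+1 : ℕ):ℝ) * t^(n+1-1))) t :=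
    ((hasDerivAt_pow n t).const_mul _).sub ((hasDerivAt_pow (n+1) t).const_mul _)
  rw [hd.deriv]
  rcases n with _ | n
  · simp
  · have : 0 ≤ t^n * (1 - t) := mul_nonneg (pow_nonneg ht.1.le _) (by linarith [ht.2])
    simp only [Nat.add_sub_cancel]
    push_cast
    have e : ((n:ℝ)+1+1) * ((n+1) * t^n) - (n+1) * ((n+1+1) * t^(n+1))
      = (n+1+1)*(n+1) * (t^n * (1-t)) := by ring
    rw [e]; positivity

end aux

/-- For an `R`-Schauder decomposition, any multiplier `T = M_c` associated with a
nondecreasing sequence `0 < c_n < 1` is `R`-Ritt. -/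
theorem statement2 {X : Type*} [NormedAddCommGroup X] [NormedSpace ℂ X] [CompleteSpace X]
    (p : ℕ → X →L[ℂ] X) (hp : IsSchauderDecomposition p)
    (hR : IsRBounded (Set.range fun N : ℕ => partialSum p (N + 1)))
    (c : ℕ → ℝ) (hc : Monotone c) (hc01 : ∀ n, 0 < c n ∧ c n < 1)
    (T : X →L[ℂ] X)
    (hT : ∀ x : X, Tendsto (fun N => ∑ n ∈ Finset.range N, ((c n : ℝ) : ℂ) • p n x)
      atTop (nhds (T x))) :
    IsRBounded (Set.range fun n : ℕ => T ^ n) ∧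
    IsRBounded {S : X →L[ℂ] X | ∃ n : ℕ, 1 ≤ n ∧ S = (n : ℂ) • (T ^ n * (1 - T))} := by
  have hpT : ∀ m x, p m (T x) = c m • p m x := by
    intro m x
    have h1 := ((p m).continuous.tendsto (T x)).comp (hT x)
    refine tendsto_nhds_unique h1 ?_
    refine tendsto_const_nhds.congr' ?_
    filter_upwards [eventually_gt_atTop m] with N hN
    simp only [Function.comp_apply, map_sum, map_smul]
    rw [Finset.sum_eq_single m]
    · have := congrArg (fun f : X →L[ℂ] X => f x) (hp.1 m)
      simp only [ContinuousLinearMap.comp_apply] at this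
      rw [this, Complex.coe_smul]
    · intro n _ hn
      have := congrArg (fun f : X →L[ℂ] X => f x) (hp.2.1 m n hn.symm)
      simp only [ContinuousLinearMap.comp_apply, zero_apply] at this
      rw [this, smul_zero]
    · intro h; exact absurd (Finset.mem_range.2 hN) h
  have hpTn : ∀ n m x, p m ((T^n) x) = (c m)^n • p m x := by
    intro n
    induction n with
    | zero => intro m x; simp
    | succ n ih =>
      intro m x
      rw [pow_succ, mul_apply_eq_comp, ih, hpT, smul_smul, pow_succ]
  have hpow : ∀ n, Monotone (fun m => c m ^ n) := fun n a b hab =>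
    pow_le_pow_left₀ (hc01 a).1.le (hc hab) n
  have hpow01 : ∀ n m, 0 ≤ c m ^ n ∧ c m ^ n ≤ 1 := fun n m =>
    ⟨pow_nonneg (hc01 m).1.le _, pow_le_one₀ (hc01 m).1.le (hc01 m).2.le⟩
  constructor
  · refine mult_rbdd p hp hR _ ?_
    rintro _ ⟨n, rfl⟩
    refine ⟨fun m => c m ^ n, fun _ => 0, hpow n, monotone_const, hpow01 n, by simp, ?_⟩
    intro m x
    simp only [hpTn, sub_zero]
  · refine mult_rbdd p hp hR _ ?_
    rintro _ ⟨n, hn, rfl⟩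
    have hr0 : (0:ℝ) ≤ n / (n+1) := by positivity
    have hr1 : (n:ℝ) / (n+1) ≤ 1 := by
      rw [div_le_one (by positivity)]; linarith
    have hmem : ∀ m, c m ∈ Set.Icc (0:ℝ) 1 := fun m => ⟨(hc01 m).1.le, (hc01 m).2.le⟩
    refine ⟨fun m => (n / (n+1) : ℝ) * ((n+1) * c m ^ n - n * c m ^ (n+1)),
      fun m => (n / (n+1) : ℝ) * c m ^ (n+1), ?_, ?_, ?_, ?_, ?_⟩
    · intro a b hab
      exact mul_le_mul_of_nonneg_left (Q_mono n (hmem a) (hmem b) (hc hab)) hr0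
    · exact fun a b hab => mul_le_mul_of_nonneg_left (hpow _ hab) hr0
    · intro m
      have h1 := Q_mono n (hmem m) (Set.right_mem_Icc.2 zero_le_one) (hmem m).2
      simp only [one_pow] at h1
      have h0 : 0 ≤ ((n:ℝ)+1) * c m ^ n - n * c m ^ (n+1) := by
        have e : ((n:ℝ)+1) * c m ^ n - n * c m ^ (n+1)
          = c m ^ n + n * (c m ^ n * (1 - c m)) := by ring
        have := mul_nonneg (hpow01 n m).1 (sub_nonneg.2 (hmem m).2)
        have := (hpow01 n m).1
        rw [e]; positivity
      exact ⟨mul_nonneg hr0 h0, mul_le_one₀ hr1 h0 (by linarith)⟩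
    · intro m
      exact ⟨mul_nonneg hr0 (hpow01 _ m).1, mul_le_one₀ hr1 (hpow01 _ m).1 (hpow01 _ m).2⟩
    · intro m x
      have e : (n / (n+1) : ℝ) * ((n+1) * c m ^ n - n * c m ^ (n+1)) - (n / (n+1) : ℝ) * c m ^ (n+1)
          = n * (c m ^ n - c m ^ (n+1)) := by
        field_simp; ring
      simp only [e]
      have hs : ((n : ℂ) • (T ^ n * (1 - T))) x = (n:ℂ) • ((T^n) x - (T^(n+1)) x) := by
        simp [pow_succ, mul_sub]
      rw [hs, map_smul, map_sub, hpTn, hpTn, ← sub_smul, mul_smul, Nat.cast_smul_eq_nsmul,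
        Nat.cast_smul_eq_nsmul]
end

section
/- Let (p_n)_{n≥1} be an R-Schauder decomposition of a complex Banach space X. Let (a_n)_{n≥1} be a nondecreasing bounded sequence of positive real numbers and let A = M_a ∈ B(X) be the associated multiplier operator. Then for every θ ∈ (0,π), every λ ∈ ℂ ∖ closure(Σ_θ) belongs to the resolvent set of A, and the set {λ (λ I − A)^{-1} : λ ∈ ℂ ∖ closure(Σ_θ)} is R-bounded. -/
open Filter Topology NormedSpace

/-- The open sector `Σ_θ = {λ ∈ ℂ∖{0} : |Arg λ| < θ}`. -/
def sector (θ : ℝ) : Set ℂ := {z : ℂ | z ≠ 0 ∧ |Complex.arg z| < θ}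


section helpers
variable {X : Type*} [NormedAddCommGroup X] [NormedSpace ℂ X]

lemma signAvg_nonneg' (k : ℕ) (v : Fin k → X) : 0 ≤ signAvg k v := by
  unfold signAvg; positivity

lemma signAvg_add' (k : ℕ) (v w : Fin k → X) :
    signAvg k (fun j => v j + w j) ≤ signAvg k v + signAvg k w := by
  unfold signAvg
  rw [← mul_add, ← Finset.sum_add_distrib]
  gcongr with ε _
  simp only [smul_add, Finset.sum_add_distrib]
  exact norm_add_le _ _

lemma signAvg_smul' (k : ℕ) (c : ℂ) (v : Fin k → X) :
    signAvg k (fun j => c • v j) = ‖c‖ * signAvg k v := by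
  unfold signAvg
  rw [mul_left_comm]
  congr 1
  rw [Finset.mul_sum]
  refine Finset.sum_congr rfl fun ε _ => ?_
  rw [← norm_smul, Finset.smul_sum (r := c)]
  congr 1
  refine Finset.sum_congr rfl fun j _ => ?_
  rw [smul_comm]

lemma signAvg_smul_real' (k : ℕ) (c : ℝ) (v : Fin k → X) :
    signAvg k (fun j => c • v j) = |c| * signAvg k v := by
  have := signAvg_smul' k (c : ℂ) v
  simpa using this

lemma signAvg_sign' (k : ℕ) (t : Fin k → ℝ) (ht : ∀ j, t j = -1 ∨ t j = 1) (v : Fin k → X) :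
    signAvg k (fun j => t j • v j) = signAvg k v := by
  classical
  unfold signAvg
  congr 1
  let f : (Fin k → Bool) → (Fin k → Bool) := fun ε j => if t j = 1 then ε j else !(ε j)
  have hf : Function.Involutive f := by
    intro ε; funext j; simp only [f]; split_ifs <;> simp
  rw [← Equiv.sum_comp hf.toPerm]
  refine Finset.sum_congr rfl fun ε _ => ?_
  congr 1
  refine Finset.sum_congr rfl fun j _ => ?_
  have hv : (Function.Involutive.toPerm f hf) ε j = if t j = 1 then ε j else !(ε j) := rfl
  rw [hv]
  beta_reduce
  rcases ht j with h | h
  · have h' : ¬ (t j = 1) := by rw [h]; norm_num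
    rw [if_neg h', h]
    cases ε j <;> simp
  · rw [if_pos h, h]; simp

lemma signAvg_hull' {E : Type*} [AddCommGroup E] [Module ℝ E] (k : ℕ)
    (φ : Fin k → E →ₗ[ℝ] X) (s : Set E) (B : ℝ)
    (hB : ∀ e : Fin k → E, (∀ j, e j ∈ s) → signAvg k (fun j => φ j (e j)) ≤ B)
    (e : Fin k → E) (he : ∀ j, e j ∈ convexHull ℝ s) :
    signAvg k (fun j => φ j (e j)) ≤ B := by
  have hconv : ConvexOn ℝ Set.univ (fun e : Fin k → E => signAvg k (fun j => φ j (e j))) := by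
    refine ⟨convex_univ, ?_⟩
    intro x _ y _ α β hα hβ _
    simp only [Pi.add_apply, Pi.smul_apply, map_add, map_smul, smul_eq_mul]
    refine (signAvg_add' k _ _).trans ?_
    rw [signAvg_smul_real', signAvg_smul_real', abs_of_nonneg hα, abs_of_nonneg hβ]
  have hmem : e ∈ convexHull ℝ (Set.univ.pi fun _ : Fin k => s) := by
    rw [convexHull_pi]
    intro j _
    exact he j
  obtain ⟨y, hy, hle⟩ := hconv.exists_ge_of_mem_convexHull (Set.subset_univ _) hmem
  exact hle.trans (hB y fun j => hy j trivial)

lemma signAvg_contr_real' (k : ℕ) (t : Fin k → ℝ) (ht : ∀ j, |t j| ≤ 1) (v : Fin k → X) :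
    signAvg k (fun j => t j • v j) ≤ signAvg k v := by
  refine signAvg_hull' k (fun j => LinearMap.toSpanSingleton ℝ X (v j)) {-1, 1} _ ?_ t ?_
  · intro e he
    simp only [LinearMap.toSpanSingleton_apply]
    exact (signAvg_sign' k e (fun j => by simpa using he j) v).le
  · intro j
    rw [convexHull_pair, segment_eq_Icc (by norm_num)]
    exact abs_le.1 (ht j)

lemma signAvg_contr' (k : ℕ) (z : Fin k → ℂ) (hz : ∀ j, ‖z j‖ ≤ 1) (v : Fin k → X) :
    signAvg k (fun j => z j • v j) ≤ 2 * signAvg k v := by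
  have h1 : (fun j => z j • v j) =
      fun j => (z j).re • v j + Complex.I • ((z j).im • v j) := by
    funext j
    conv_lhs => rw [← Complex.re_add_im (z j)]
    rw [add_smul, mul_comm, mul_smul]
    simp
  rw [h1]
  refine (signAvg_add' k _ _).trans ?_
  rw [signAvg_smul' k Complex.I (fun j => (z j).im • v j), Complex.norm_I]
  have := signAvg_contr_real' k (fun j => (z j).re)
    (fun j => (Complex.abs_re_le_norm _).trans (hz j)) v
  have := signAvg_contr_real' k (fun j => (z j).im)
    (fun j => (Complex.abs_im_le_norm _).trans (hz j)) v
  linarith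

/-- finite combinations -/
lemma signAvg_comb' (P : ℕ → X →L[ℂ] X) (C : ℝ)
    (hC : ∀ (k : ℕ) (T : Fin k → X →L[ℂ] X) (x : Fin k → X),
    (∀ j, T j ∈ Set.range P) → signAvg k (fun j => (T j) (x j)) ≤ C * signAvg k x)
    (k N : ℕ) (w : Fin k → ℕ → ℂ) (hw : ∀ j, ∑ m ∈ Finset.range N, ‖w j m‖ ≤ 1)
    (x : Fin k → X) :
    signAvg k (fun j => ∑ m ∈ Finset.range N, w j m • P m (x j)) ≤ 2 * (C * signAvg k x) := by
  let G : Set (X →L[ℂ] X) := {S | ∃ (z : ℂ) (m : ℕ), ‖z‖ ≤ 1 ∧ S = z • P m}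
  let φ : Fin k → (X →L[ℂ] X) →ₗ[ℝ] X := fun j =>
    { toFun := fun T => T (x j)
      map_add' := fun _ _ => rfl
      map_smul' := fun _ _ => rfl }
  have key := signAvg_hull' k φ G (2 * (C * signAvg k x)) ?_
    (fun j => ∑ m ∈ Finset.range N, w j m • P m) ?_
  · simpa [φ] using key
  · intro e he
    choose z m hz he using he
    have : (fun j => φ j (e j)) = fun j => z j • (P (m j) (x j)) := by
      funext j; simp [φ, he j]
    rw [this]
    refine (signAvg_contr' k z hz _).trans ?_
    have := hC k (fun j => P (m j)) x (fun j => ⟨m j, rfl⟩)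
    linarith
  · intro j
    have hcv := convex_convexHull ℝ G
    have h0 : (0 : X →L[ℂ] X) ∈ convexHull ℝ G :=
      subset_convexHull ℝ G ⟨0, 0, by simp, by simp⟩
    set W := ∑ m ∈ Finset.range N, ‖w j m‖ with hW
    have hW0 : 0 ≤ W := by positivity
    rcases hW0.eq_or_lt with h | h
    · have hz : ∀ m ∈ Finset.range N, ‖w j m‖ = 0 :=
        (Finset.sum_eq_zero_iff_of_nonneg (fun _ _ => norm_nonneg _)).1 (hW ▸ h.symm)
      have : ∑ m ∈ Finset.range N, w j m • P m = 0 :=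
        Finset.sum_eq_zero fun m hm => by rw [norm_eq_zero.1 (hz m hm), zero_smul]
      rw [this]; exact h0
    · have hmem : ∑ m ∈ Finset.range N, (‖w j m‖ / W) • ((w j m / (‖w j m‖ : ℂ)) • P m)
          ∈ convexHull ℝ G := by
        refine hcv.sum_mem (fun m _ => by positivity) ?_ ?_
        · rw [← Finset.sum_div, ← hW, div_self h.ne']
        · intro m _
          refine subset_convexHull ℝ G ⟨_, m, ?_, rfl⟩
          rw [norm_div]
          simp only [Complex.norm_real, norm_norm]
          exact div_self_le_one _
      have := hcv.smul_mem_of_zero_mem h0 hmem (t := W) ⟨hW0, hw j⟩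
      convert this using 1
      rw [Finset.smul_sum]
      refine Finset.sum_congr rfl fun m _ => ?_
      rw [smul_smul, mul_div_cancel₀ _ h.ne']
      by_cases hz : w j m = 0
      · simp [hz]
      · have hn : (‖w j m‖ : ℂ) ≠ 0 := by simpa using hz
        have : (‖w j m‖ : ℝ) • ((w j m / (‖w j m‖ : ℂ)) • P m)
          = (‖w j m‖ : ℂ) • ((w j m / (‖w j m‖ : ℂ)) • P m) := rfl
        rw [this, smul_smul, mul_div_cancel₀ _ hn]

lemma abel' {E : Type*} [AddCommGroup E] [Module ℂ E] (d : ℕ → ℂ) (q : ℕ → E) (N : ℕ) :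
    ∑ n ∈ Finset.range (N + 1), d n • q n =
      d N • (∑ n ∈ Finset.range (N + 1), q n) +
      ∑ m ∈ Finset.range N, (d m - d (m + 1)) • (∑ n ∈ Finset.range (m + 1), q n) := by
  induction N with
  | zero => simp
  | succ N ih =>
    rw [Finset.sum_range_succ, ih, Finset.sum_range_succ q (N + 1),
      Finset.sum_range_succ (fun m => (d m - d (m + 1)) • (∑ n ∈ Finset.range (m + 1), q n)) N]
    module

lemma sector_bound' (θ : ℝ) (hθ : θ ∈ Set.Ioo (0 : ℝ) Real.pi) (lam : ℂ)
    (hl : lam ∉ sector θ) (t : ℝ) (ht : 0 ≤ t) :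
    Real.sin (θ / 2) * (‖lam‖ + t) ≤ ‖lam - t‖ := by
  by_cases h0 : lam = 0
  · subst h0
    simp only [norm_zero, zero_add, zero_sub, norm_neg, Complex.norm_real, Real.norm_eq_abs,
      abs_of_nonneg ht]
    nlinarith [Real.sin_le_one (θ / 2)]
  · have harg : θ ≤ |lam.arg| := by
      by_contra h
      exact hl ⟨h0, not_le.1 h⟩
    have hcos : Real.cos lam.arg ≤ Real.cos θ := by
      rw [← Real.cos_abs lam.arg]
      exact Real.cos_le_cos_of_nonneg_of_le_pi hθ.1.le (Complex.abs_arg_le_pi _) harg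
    refine le_of_sq_le_sq ?_ (norm_nonneg _)
    have hre : lam.re = ‖lam‖ * Real.cos lam.arg := (Complex.norm_mul_cos_arg lam).symm
    have h1 : ‖lam - t‖ ^ 2 = ‖lam‖ ^ 2 + t ^ 2 - 2 * t * lam.re := by
      rw [Complex.sq_norm, Complex.sq_norm, Complex.normSq_apply, Complex.normSq_apply]
      simp; ring
    have h2 : Real.cos θ = 1 - 2 * Real.sin (θ / 2) ^ 2 := by
      have := Real.cos_two_mul (θ / 2)
      have h3 := Real.sin_sq_add_cos_sq (θ / 2)
      rw [show 2 * (θ / 2) = θ by ring] at this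
      linarith
    have h4 : Real.sin (θ / 2) ^ 2 ≤ 1 := Real.sin_sq_le_one _
    have h5 : t * ‖lam‖ * Real.cos lam.arg ≤ t * ‖lam‖ * Real.cos θ :=
      mul_le_mul_of_nonneg_left hcos (by positivity)
    rw [h1, hre, mul_pow]
    rw [h2] at h5
    nlinarith [mul_nonneg (sub_nonneg.2 h4) (sq_nonneg (‖lam‖ - t))]

lemma var_bound' (a : ℕ → ℝ) (ha : Monotone a) (hapos : ∀ n, 0 < a n) (lam : ℂ) (s : ℝ)
    (hs0 : 0 < s) (hs1 : s ≤ 1) (hs : ∀ n, s * (‖lam‖ + a n) ≤ ‖lam - a n‖) (N : ℕ) :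
    ∑ m ∈ Finset.range N, ‖(lam - a m)⁻¹ - (lam - a (m + 1))⁻¹‖ + ‖(lam - a N)⁻¹‖
      ≤ (s ^ 2)⁻¹ * (‖lam‖ + a 0)⁻¹ := by
  have hr : ∀ n, 0 < ‖lam‖ + a n := fun n => by have := hapos n; positivity
  have hpos : ∀ n, 0 < ‖lam - a n‖ := fun n => (mul_pos hs0 (hr n)).trans_le (hs n)
  have hne : ∀ n, lam - a n ≠ 0 := fun n => norm_pos_iff.1 (hpos n)
  have hstep : ∀ m, ‖(lam - a m)⁻¹ - (lam - a (m + 1))⁻¹‖ ≤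
      (s ^ 2)⁻¹ * (‖lam‖ + a m)⁻¹ - (s ^ 2)⁻¹ * (‖lam‖ + a (m + 1))⁻¹ := by
    intro m
    have hle : 0 ≤ a (m + 1) - a m := sub_nonneg.2 (ha (Nat.le_succ m))
    have e1 : (lam - a m)⁻¹ - (lam - a (m + 1))⁻¹ =
        -((a (m + 1) - a m : ℝ) : ℂ) / ((lam - a m) * (lam - a (m + 1))) := by
      rw [inv_sub_inv (hne m) (hne (m + 1))]
      push_cast; ring
    have e2 : (s ^ 2)⁻¹ * (‖lam‖ + a m)⁻¹ - (s ^ 2)⁻¹ * (‖lam‖ + a (m + 1))⁻¹ =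
        (a (m + 1) - a m) / ((s * (‖lam‖ + a m)) * (s * (‖lam‖ + a (m + 1)))) := by
      have := (hr m).ne'
      have := (hr (m + 1)).ne'
      field_simp
      ring
    rw [e1, e2, norm_div, norm_neg, norm_mul, Complex.norm_real, Real.norm_eq_abs,
      abs_of_nonneg hle]
    have := hr m
    have := hr (m + 1)
    gcongr
    · exact hs m
    · exact hs (m + 1)
  have hlast : ‖(lam - a N)⁻¹‖ ≤ (s ^ 2)⁻¹ * (‖lam‖ + a N)⁻¹ := by
    rw [norm_inv, ← mul_inv]
    have := hr N
    refine inv_anti₀ (by positivity) (le_trans ?_ (hs N))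
    gcongr
    nlinarith
  have hsum := Finset.sum_le_sum fun m (_ : m ∈ Finset.range N) => hstep m
  rw [Finset.sum_range_sub' (fun m => (s ^ 2)⁻¹ * (‖lam‖ + a m)⁻¹)] at hsum
  linarith

lemma mult_tendsto' [CompleteSpace X] (p : ℕ → X →L[ℂ] X)
    (hp : ∀ x : X, Tendsto (fun N => ∑ n ∈ Finset.range N, p n x) atTop (nhds x))
    (d : ℕ → ℂ) (hd : Summable fun m => ‖d m - d (m + 1)‖) :
    ∃ B : X →L[ℂ] X, ∀ x, Tendsto (fun N => ∑ n ∈ Finset.range N, d n • p n x)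
      atTop (nhds (B x)) := by
  have hdl : ∃ l, Tendsto d atTop (nhds l) :=
    cauchySeq_tendsto_of_complete
      (cauchySeq_of_summable_dist (by simpa [dist_eq_norm] using hd))
  obtain ⟨l, hl⟩ := hdl
  have hex : ∀ x, ∃ y, Tendsto (fun N => ∑ n ∈ Finset.range N, d n • p n x) atTop (nhds y) := by
    intro x
    obtain ⟨K, hK⟩ := (Metric.isBounded_range_of_tendsto _ (hp x)).exists_norm_le
    have hK' : ∀ N, ‖∑ n ∈ Finset.range N, p n x‖ ≤ K := fun N => hK _ ⟨N, rfl⟩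
    have hsm : Summable fun m => (d m - d (m + 1)) • (∑ n ∈ Finset.range (m + 1), p n x) := by
      refine Summable.of_norm_bounded (hd.mul_right K) fun m => ?_
      rw [norm_smul]
      exact mul_le_mul_of_nonneg_left (hK' _) (norm_nonneg _)
    refine ⟨l • x + ∑' m, (d m - d (m + 1)) • (∑ n ∈ Finset.range (m + 1), p n x),
      (tendsto_add_atTop_iff_nat 1).1 ?_⟩
    · simp only [abel']
      exact (hl.smul ((tendsto_add_atTop_iff_nat 1).2 (hp x))).add hsm.hasSum.tendsto_sum_nat
  choose f hf using hex
  refine ⟨continuousLinearMapOfTendsto (f := f)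
    (fun N : ℕ => ∑ n ∈ Finset.range N, d n • p n) (l := atTop) ?_, ?_⟩
  · rw [tendsto_pi_nhds]
    intro x
    simpa using hf x
  · intro x
    exact hf x

end helpers

/-- For an `R`-Schauder decomposition and a nondecreasing bounded positive sequence `a`,
the multiplier `A = M_a` is `R`-sectorial of `R`-type `0`. -/
theorem statement3 {X : Type*} [NormedAddCommGroup X] [NormedSpace ℂ X] [CompleteSpace X]
    (p : ℕ → X →L[ℂ] X) (hp : IsSchauderDecomposition p)
    (hR : IsRBounded (Set.range fun N : ℕ => partialSum p (N + 1)))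
    (a : ℕ → ℝ) (ha : Monotone a) (hapos : ∀ n, 0 < a n) (habd : ∃ M : ℝ, ∀ n, a n ≤ M)
    (A : X →L[ℂ] X)
    (hA : ∀ x : X, Tendsto (fun N => ∑ n ∈ Finset.range N, ((a n : ℝ) : ℂ) • p n x)
      atTop (nhds (A x)))
    (θ : ℝ) (hθ : θ ∈ Set.Ioo (0 : ℝ) Real.pi) :
    (∀ lam : ℂ, lam ∉ closure (sector θ) → lam ∈ resolventSet ℂ A) ∧
    IsRBounded {S : X →L[ℂ] X | ∃ lam : ℂ, lam ∉ closure (sector θ) ∧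
      S = lam • Ring.inverse (algebraMap ℂ (X →L[ℂ] X) lam - A)} := by
  classical
  obtain ⟨hidem, horth, hconv⟩ := hp
  obtain ⟨C, hC0, hC⟩ := hR
  set s := Real.sin (θ / 2) with hsdef
  have hs0 : 0 < s := Real.sin_pos_of_pos_of_lt_pi (by linarith [hθ.1]) (by linarith [hθ.1, hθ.2])
  have hs1 : s ≤ 1 := Real.sin_le_one _
  have hpp : ∀ m n x, p m (p n x) = if m = n then p n x else 0 := by
    intro m n x
    split_ifs with h
    · subst h; exact DFunLike.congr_fun (hidem m) x
    · exact DFunLike.congr_fun (horth m n h) x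
  have hlow : ∀ lam : ℂ, lam ∉ closure (sector θ) → ∀ n, s * (‖lam‖ + a n) ≤ ‖lam - a n‖ :=
    fun lam hl n => sector_bound' θ hθ lam (fun h => hl (subset_closure h)) (a n) (hapos n).le
  -- p n commutes with A
  have hpA : ∀ n x, p n (A x) = (a n : ℂ) • p n x := by
    intro n x
    have h1 := ((p n).continuous.tendsto _).comp (hA x)
    refine tendsto_nhds_unique h1 (tendsto_const_nhds.congr' ?_)
    filter_upwards [eventually_gt_atTop n] with N hN
    simp [hpp, hN]
  have hAp : ∀ n x, A (p n x) = (a n : ℂ) • p n x := by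
    intro n x
    refine tendsto_nhds_unique (hA (p n x)) (tendsto_const_nhds.congr' ?_)
    filter_upwards [eventually_gt_atTop n] with N hN
    simp [hpp, hN]
  have main : ∀ lam : ℂ, lam ∉ closure (sector θ) → ∃ B : X →L[ℂ] X,
      B * (algebraMap ℂ (X →L[ℂ] X) lam - A) = 1 ∧ (algebraMap ℂ (X →L[ℂ] X) lam - A) * B = 1 ∧
      ∀ x, Tendsto (fun N => ∑ n ∈ Finset.range N, (lam - a n)⁻¹ • p n x)
        atTop (nhds (B x)) := by
    intro lam hl
    have hv := var_bound' a ha hapos lam s hs0 hs1 (hlow lam hl)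
    have hne : ∀ n, lam - a n ≠ 0 := fun n => norm_pos_iff.1 <|
      (mul_pos hs0 (add_pos_of_nonneg_of_pos (norm_nonneg _) (hapos n))).trans_le (hlow lam hl n)
    obtain ⟨B, hB⟩ := mult_tendsto' p hconv (fun n => (lam - a n)⁻¹)
      (summable_of_sum_range_le (fun _ => norm_nonneg _)
        (fun N => (le_add_of_nonneg_right (norm_nonneg _)).trans (hv N)))
    refine ⟨B, ?_, ?_, hB⟩
    · ext x
      refine tendsto_nhds_unique (hB _) ((hconv x).congr fun N => ?_)
      refine Finset.sum_congr rfl fun n _ => ?_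
      change p n x = (lam - a n)⁻¹ • p n (lam • x - A x)
      rw [map_sub, map_smul, hpA]
      rw [← sub_smul, smul_smul, inv_mul_cancel₀ (hne n), one_smul]
    · ext x
      refine tendsto_nhds_unique
        (((algebraMap ℂ (X →L[ℂ] X) lam - A).continuous.tendsto _).comp (hB x))
        ((hconv x).congr fun N => ?_)
      simp only [Function.comp_apply, map_sum]
      refine Finset.sum_congr rfl fun n _ => ?_
      rw [map_smul]
      change p n x = (lam - a n)⁻¹ • (lam • p n x - A (p n x))
      rw [hAp]
      rw [← sub_smul, smul_smul, inv_mul_cancel₀ (hne n), one_smul]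
  refine ⟨?_, ?_⟩
  · intro lam hl
    obtain ⟨B, h1, h2, _⟩ := main lam hl
    exact ⟨⟨_, B, h2, h1⟩, rfl⟩
  refine ⟨(s ^ 2)⁻¹ * (2 * C), by positivity, ?_⟩
  intro k T x hT
  choose lam hl hT using hT
  choose B h1 h2 hB using fun j => main (lam j) (hl j)
  have hTB : ∀ j, T j = lam j • B j := by
    intro j
    rw [hT j]
    congr 1
    exact Ring.inverse_unit (⟨_, B j, h2 j, h1 j⟩ : (X →L[ℂ] X)ˣ)
  have hlim : Tendsto (fun N => signAvg k
      (fun j => lam j • ∑ n ∈ Finset.range (N + 1), (lam j - a n)⁻¹ • p n (x j))) atTop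
      (nhds (signAvg k (fun j => T j (x j)))) := by
    unfold signAvg
    refine Tendsto.const_mul _ (tendsto_finsetSum _ fun ε _ => Tendsto.norm
      (tendsto_finsetSum _ fun j _ => Tendsto.const_smul ?_ _))
    beta_reduce
    rw [hTB j]
    exact Tendsto.const_smul ((tendsto_add_atTop_iff_nat 1).2 (hB j (x j))) _
  refine le_of_tendsto' hlim fun N => ?_
  let w : Fin k → ℕ → ℂ := fun j m => ((s ^ 2 : ℝ) : ℂ) * (lam j * (if m = N then (lam j - a N)⁻¹ else
    ((lam j - a m)⁻¹ - (lam j - a (m + 1))⁻¹)))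
  have hwN : ∀ j, w j N = ((s ^ 2 : ℝ) : ℂ) * (lam j * (lam j - a N)⁻¹) := fun j => by simp [w]
  have hwm : ∀ j, ∀ m ∈ Finset.range N, w j m =
      ((s ^ 2 : ℝ) : ℂ) * (lam j * ((lam j - a m)⁻¹ - (lam j - a (m + 1))⁻¹)) := fun j m hm => by
    simp only [w, if_neg (Finset.mem_range.1 hm).ne]
  have hw : ∀ j, ∑ m ∈ Finset.range (N + 1), ‖w j m‖ ≤ 1 := by
    intro j
    have hv := var_bound' a ha hapos (lam j) s hs0 hs1 (hlow _ (hl j)) N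
    rw [Finset.sum_range_succ, Finset.sum_congr rfl fun m hm => by rw [hwm j m hm], hwN]
    simp only [norm_mul]
    rw [← Finset.mul_sum, ← Finset.mul_sum, ← mul_add, ← mul_add, Complex.norm_real,
      Real.norm_of_nonneg (by positivity)]
    have ha0 := hapos 0
    calc s ^ 2 * (‖lam j‖ * _) ≤ s ^ 2 * (‖lam j‖ * ((s ^ 2)⁻¹ * (‖lam j‖ + a 0)⁻¹)) := by gcongr
      _ = ‖lam j‖ / (‖lam j‖ + a 0) := by field_simp
      _ ≤ 1 := by rw [div_le_one (by positivity)]; linarith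
  have hfin := signAvg_comb' (fun N => partialSum p (N + 1)) C hC k (N + 1) w hw x
  have heq : (fun j => ∑ m ∈ Finset.range (N + 1), w j m • partialSum p (m + 1) (x j)) =
      fun j => ((s ^ 2 : ℝ) : ℂ) •
        (lam j • ∑ n ∈ Finset.range (N + 1), (lam j - a n)⁻¹ • p n (x j)) := by
    funext j
    rw [abel' (fun n => (lam j - a n)⁻¹), Finset.sum_range_succ,
      Finset.sum_congr rfl fun m hm => by rw [hwm j m hm], hwN]
    simp only [partialSum, ContinuousLinearMap.sum_apply, mul_smul, ← Finset.smul_sum, smul_add]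
    rw [add_comm]
  rw [heq, signAvg_smul', Complex.norm_real, Real.norm_of_nonneg (by positivity)] at hfin
  rw [mul_assoc, mul_assoc, ← div_eq_inv_mul, le_div_iff₀ (by positivity), mul_comm]
  exact hfin
end

section
/- Let (p_n)_{n≥1} be a Schauder decomposition of a complex Banach space X with K := sup_{N≥1} ‖P_N‖, and set Q_N := I − P_N. Define a_n = (n!)^3 for n ≥ 1, let B = M_b ∈ B(X) be the multiplier operator associated with b_n = a_n^{-1} = (n!)^{-3}, and set t_N = N·(N!)^3 for N ≥ 1. Then for every N ≥ 1, ‖exp(−t_N B) − Q_N‖ ≤ 2(1+K)(e^{−N} + N^{−2}); in particular the series ∑_{N=1}^∞ ‖exp(−t_N B) − Q_N‖ converges. -/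
open Filter Topology NormedSpace

/-- The sequence `a_n = (n!)³` (here `aSeq N = ((N+1)!)³`, `1`-based). -/
noncomputable def aSeq (N : ℕ) : ℝ := (Nat.factorial (N + 1) : ℝ) ^ 3

/-- The times `t_N = N (N!)³` (here `tSeq N = (N+1)((N+1)!)³`, `1`-based). -/
noncomputable def tSeq (N : ℕ) : ℝ := (N + 1 : ℝ) * (Nat.factorial (N + 1) : ℝ) ^ 3


theorem exp_apply_eig {X : Type*} [NormedAddCommGroup X] [NormedSpace ℂ X] [CompleteSpace X]
    (T : X →L[ℂ] X) (c : ℂ) (y : X) (h : T y = c • y) : (exp T) y = (Complex.exp c) • y := by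
  have hpow : ∀ n : ℕ, (T ^ n) y = c ^ n • y := by
    intro n
    induction n with
    | zero => simp
    | succ n ih =>
      rw [pow_succ', ContinuousLinearMap.mul_apply, ih, map_smul, h, smul_smul, pow_succ]
  have h1 : HasSum (fun n : ℕ => ((n.factorial : ℂ)⁻¹ • T ^ n) y) ((exp T) y) :=
    (exp_series_hasSum_exp' (𝕂 := ℂ) T).mapL (ContinuousLinearMap.apply ℂ X y)
  have h2 : HasSum (fun n : ℕ => ((n.factorial : ℂ)⁻¹ • c ^ n) • y) ((exp c) • y) :=
    (exp_series_hasSum_exp' (𝕂 := ℂ) c).smul_const y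
  rw [Complex.exp_eq_exp_ℂ]
  refine h1.unique ?_
  convert h2 using 2 with n
  simp [hpow, smul_smul]

theorem abel_bound {X : Type*} [NormedAddCommGroup X] [NormedSpace ℂ X]
    (d : ℕ → ℝ) (v : ℕ → X) (C : ℝ) (hC : ∀ n, ‖∑ i ∈ Finset.range (n + 1), v i‖ ≤ C) (L : ℕ) :
    ‖∑ n ∈ Finset.range (L + 1), (d n : ℂ) • v n‖ ≤
      C * (∑ n ∈ Finset.range L, |d (n + 1) - d n| + |d L|) := by
  have key : ∑ n ∈ Finset.range (L + 1), (d n : ℂ) • v n =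
      (d L : ℂ) • (∑ i ∈ Finset.range (L + 1), v i) -
      ∑ n ∈ Finset.range L, ((d (n + 1) - d n : ℝ) : ℂ) • ∑ i ∈ Finset.range (n + 1), v i := by
    induction L with
    | zero => simp
    | succ L ih =>
      rw [Finset.sum_range_succ, ih, Finset.sum_range_succ v (L + 1),
        Finset.sum_range_succ (fun n => ((d (n + 1) - d n : ℝ) : ℂ) • ∑ i ∈ Finset.range (n + 1), v i) L]
      push_cast
      module
  rw [key]
  have h1 : ‖(d L : ℂ) • (∑ i ∈ Finset.range (L + 1), v i)‖ ≤ C * |d L| := by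
    rw [norm_smul, Complex.norm_real, Real.norm_eq_abs, mul_comm]
    exact mul_le_mul_of_nonneg_right (hC L) (abs_nonneg _)
  have h2 : ‖∑ n ∈ Finset.range L, ((d (n + 1) - d n : ℝ) : ℂ) • ∑ i ∈ Finset.range (n + 1), v i‖
      ≤ C * ∑ n ∈ Finset.range L, |d (n + 1) - d n| := by
    rw [Finset.mul_sum]
    refine norm_sum_le_of_le _ fun n _ => ?_
    rw [norm_smul, Complex.norm_real, Real.norm_eq_abs, mul_comm]
    exact mul_le_mul_of_nonneg_right (hC n) (abs_nonneg _)
  calc _ ≤ _ := norm_sub_le _ _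
    _ ≤ _ := by rw [mul_add]; linarith

theorem var_bound (e : ℕ → ℝ) (he : Monotone e) (h0 : ∀ n, 0 ≤ e n) (h1 : ∀ n, e n ≤ 1)
    (N k : ℕ) (d : ℕ → ℝ) (hd : ∀ n, d n = if n ≤ N then e n else e n - 1) :
    ∑ n ∈ Finset.range (N + 1 + k), |d (n + 1) - d n| + |d (N + 1 + k)| ≤
      2 * (e N + (1 - e (N + 1))) := by
  have a1 : ∑ n ∈ Finset.range N, |d (n + 1) - d n| = e N - e 0 := by
    rw [← Finset.sum_range_sub]
    refine Finset.sum_congr rfl fun n hn => ?_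
    have := Finset.mem_range.1 hn
    rw [hd, hd, if_pos (by omega), if_pos (by omega),
      abs_of_nonneg (sub_nonneg.2 (he (Nat.le_succ n)))]
  have a2 : ∀ k, ∑ n ∈ Finset.range (N + 1 + k), |d (n + 1) - d n| =
      e N - e 0 + (e N - (e (N + 1) - 1)) + (e (N + 1 + k) - e (N + 1)) := by
    intro k
    induction k with
    | zero =>
      rw [add_zero, Finset.sum_range_succ, a1, hd, hd, if_neg (by omega), if_pos le_rfl,
        abs_of_nonpos (by linarith [h0 N, h1 (N + 1)])]
      ring
    | succ k ih =>
      have := he (Nat.le_succ (N + 1 + k))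
      rw [← add_assoc, Finset.sum_range_succ, ih, hd, hd, if_neg (by omega), if_neg (by omega),
        abs_of_nonneg (by simpa using this)]
      ring
  rw [a2, hd, if_neg (by omega), abs_of_nonpos (by linarith [h1 (N + 1 + k)])]
  linarith [h0 0]

/-- For `a_n = (n!)³`, `b_n = a_n⁻¹`, `B = M_b` and `t_N = N (N!)³`, one has
`‖exp(−t_N B) − Q_N‖ ≤ 2(1+K)(e^{−N} + N^{−2})`, and the series
`∑_N ‖exp(−t_N B) − Q_N‖` converges. (Index `N + 1` ↔ classical `N ≥ 1`.) -/
theorem statement10 {X : Type*} [NormedAddCommGroup X] [NormedSpace ℂ X] [CompleteSpace X]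
    (p : ℕ → X →L[ℂ] X) (hp : IsSchauderDecomposition p)
    (K : ℝ) (hK : ∀ N : ℕ, ‖partialSum p (N + 1)‖ ≤ K)
    (B : X →L[ℂ] X)
    (hB : ∀ x : X, Tendsto (fun N => ∑ n ∈ Finset.range N, (((aSeq n)⁻¹ : ℝ) : ℂ) • p n x)
      atTop (nhds (B x))) :
    (∀ N : ℕ,
      ‖exp (-((tSeq N : ℂ) • B)) - (1 - partialSum p (N + 1))‖ ≤
        2 * (1 + K) * (Real.exp (-(N + 1 : ℝ)) + ((N + 1 : ℝ) ^ 2)⁻¹)) ∧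
    Summable (fun N : ℕ => ‖exp (-((tSeq N : ℂ) • B)) - (1 - partialSum p (N + 1))‖) := by
  obtain ⟨hp1, hp2, hp3⟩ := hp
  have hK0 : 0 ≤ K := (norm_nonneg _).trans (hK 0)
  have hpp : ∀ m n x, p m (p n x) = if m = n then p n x else 0 := by
    intro m n x
    split_ifs with h
    · subst h; exact congrArg (fun T : X →L[ℂ] X => T x) (hp1 m)
    · exact congrArg (fun T : X →L[ℂ] X => T x) (hp2 m n h)
  have hBp : ∀ m x, B (p m x) = (((aSeq m)⁻¹ : ℝ) : ℂ) • p m x := by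
    intro m x
    refine tendsto_nhds_unique (hB (p m x)) ?_
    refine tendsto_const_nhds.congr' ?_
    filter_upwards [eventually_gt_atTop m] with N hN
    simp [hpp, hN]
  have hapos : ∀ n, 0 < aSeq n := fun n => by unfold aSeq; positivity
  have hamono : Monotone aSeq := by
    intro m n h
    unfold aSeq
    have : (Nat.factorial (m + 1) : ℝ) ≤ Nat.factorial (n + 1) := by
      exact_mod_cast Nat.factorial_le (by omega)
    gcongr
  have main : ∀ N : ℕ,
      ‖exp (-((tSeq N : ℂ) • B)) - (1 - partialSum p (N + 1))‖ ≤
        2 * (1 + K) * (Real.exp (-(N + 1 : ℝ)) + ((N + 1 : ℝ) ^ 2)⁻¹) := by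
    intro N
    have ht : 0 < tSeq N := by unfold tSeq; positivity
    set e : ℕ → ℝ := fun n => Real.exp (-(tSeq N * (aSeq n)⁻¹)) with he
    set d : ℕ → ℝ := fun n => if n ≤ N then e n else e n - 1 with hd
    have hem : Monotone e := by
      intro m n h
      have h1 := hamono h
      have h2 := hapos m
      simp only [he]
      gcongr
    have he0 : ∀ n, 0 ≤ e n := fun n => (Real.exp_pos _).le
    have he1 : ∀ n, e n ≤ 1 := fun n => by
      have := hapos n
      simp only [he]
      rw [Real.exp_le_one_iff]
      have : 0 < tSeq N * (aSeq n)⁻¹ := by positivity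
      linarith
    have heN : e N = Real.exp (-(N + 1 : ℝ)) := by
      have := (hapos N).ne'
      simp only [he]
      congr 2
      have h : tSeq N = (N + 1) * aSeq N := rfl
      rw [h]; field_simp
    have heN1 : 1 - e (N + 1) ≤ ((N + 1 : ℝ) ^ 2)⁻¹ := by
      have h1 : 1 - e (N + 1) ≤ tSeq N * (aSeq (N + 1))⁻¹ := by
        have := Real.add_one_le_exp (-(tSeq N * (aSeq (N + 1))⁻¹))
        simp only [he]; linarith
      refine h1.trans ?_
      have h2 : aSeq (N + 1) = (N + 2 : ℝ) ^ 3 * aSeq N := by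
        unfold aSeq
        rw [Nat.factorial_succ (N + 1)]
        push_cast; ring
      have h : tSeq N = (N + 1) * aSeq N := rfl
      have h3 := hapos N
      rw [h2, h, ← div_eq_mul_inv, ← one_div, div_le_div_iff₀ (by positivity) (by positivity)]
      have h4 : (N + 1 : ℝ) ^ 3 ≤ (N + 2 : ℝ) ^ 3 := by gcongr; norm_num
      nlinarith
    set D := exp (-((tSeq N : ℂ) • B)) - (1 - partialSum p (N + 1)) with hD
    have hDp : ∀ n x, D (p n x) = (d n : ℂ) • p n x := by
      intro n x
      have h1 : (exp (-((tSeq N : ℂ) • B))) (p n x) = ((e n : ℝ) : ℂ) • p n x := by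
        rw [exp_apply_eig _ (-((tSeq N : ℂ) * (((aSeq n)⁻¹ : ℝ) : ℂ))) (p n x)]
        · simp [he]
        · change -((tSeq N : ℂ) • B (p n x)) = _
          rw [hBp, smul_smul, neg_smul]
      have h2 : partialSum p (N + 1) (p n x) = if n ≤ N then p n x else 0 := by
        simp [partialSum, ContinuousLinearMap.sum_apply, hpp, Nat.lt_succ_iff]
      rw [hD, ContinuousLinearMap.sub_apply, h1, ContinuousLinearMap.sub_apply, h2]
      simp only [hd]
      split_ifs
      · simp
      · push_cast
        rw [sub_smul]; simp
    have hb : ‖D‖ ≤ 2 * K * (e N + (1 - e (N + 1))) := by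
      refine ContinuousLinearMap.opNorm_le_bound _ ?_ ?_
      · have := he0 N
        have := he1 (N + 1)
        have : 0 ≤ 1 - e (N + 1) := by linarith
        positivity
      intro x
      have hlim := ((D.continuous.tendsto x).comp (hp3 x)).norm
      refine le_of_tendsto hlim ?_
      filter_upwards [eventually_ge_atTop (N + 2)] with L hL
      obtain ⟨k, rfl⟩ := Nat.exists_eq_add_of_le hL
      have hL' : N + 2 + k = N + 1 + k + 1 := by omega
      simp only [Function.comp, map_sum, hDp, hL']
      have hKx : ∀ n, ‖∑ i ∈ Finset.range (n + 1), p i x‖ ≤ K * ‖x‖ := by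
        intro n
        have := (partialSum p (n + 1)).le_of_opNorm_le (hK n) x
        simpa [partialSum, ContinuousLinearMap.sum_apply] using this
      refine (abel_bound d (fun n => p n x) (K * ‖x‖) hKx (N + 1 + k)).trans ?_
      have := var_bound e hem he0 he1 N k d (fun n => rfl)
      calc _ ≤ K * ‖x‖ * (2 * (e N + (1 - e (N + 1)))) := by gcongr
        _ = _ := by ring
    refine hb.trans ?_
    rw [← heN]
    have := he0 N
    have h5 : 0 ≤ ((N + 1 : ℝ) ^ 2)⁻¹ := by positivity
    calc _ ≤ 2 * K * (e N + ((N + 1 : ℝ) ^ 2)⁻¹) := by gcongr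
      _ ≤ _ := by gcongr; linarith
  refine ⟨main, Summable.of_nonneg_of_le (fun _ => norm_nonneg _) main ?_⟩
  refine Summable.mul_left _ (Summable.add ?_ ?_)
  · have := (summable_nat_add_iff 1).2 Real.summable_exp_neg_nat
    simpa using this
  · have := (summable_nat_add_iff 1).2 (Real.summable_nat_pow_inv.2 (one_lt_two : 1 < 2))
    simpa using this
end
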